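/- For every integer n > 1, the space LO(ℤⁿ) of left orders on the free abelian group ℤⁿ is homeomorphic to the Cantor set (equivalently, to the Cantor space ℕ → Bool). -/

import Mathlib

/-- A left order on an additive semigroup: a strict linear (total) order `r`
such that `r a b` implies `r (c + a) (c + b)` for all `c`. -/
def IsLeftAddOrder {G : Type*} [Add G] (r : G → G → Prop) : Prop :=
  IsStrictTotalOrder G r ∧ ∀ a b c : G, r a b → r (c + a) (c + b)

/-- The set `LO(G)` of left orders on `G`. -/
def LeftAddOrder (G : Type*) [Add G] : Type _ :=
  {r : G → G → Prop // IsLeftAddOrder r}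

/-- `U_{a,b}` is the set of left orders `<` with `a < b`. -/
def UU {G : Type*} [Add G] (a b : G) : Set (LeftAddOrder G) := {r | r.1 a b}

/-- `LO(G)` carries the smallest topology in which every `U_{a,b}` is open. -/
instance {G : Type*} [Add G] : TopologicalSpace (LeftAddOrder G) :=
  TopologicalSpace.generateFrom {s | ∃ a b : G, s = UU a b}

/-!
The proof checks Brouwer's criterion for `LO(ℤⁿ)`.

*Compactness.* Sending an order to its truth table identifies `LO(G)` with a subspace of
`G × G → Bool`; the axioms of a left order each involve finitely many coordinates, so the image is
closed.

*No isolated points* (`exists_ne_agree`). Given an order `r` and finitely many comparisons, the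
positive differences `b - a` involved generate a semigroup omitting `0`, so some functional
`φ : ℤⁿ → ℚ` is positive on all of them (`exists_pos_functional`). Order `ℤⁿ` by `φ` first and by the
reverse of `r` on the fibres of `φ`. This respects the given comparisons, and it differs from `r`
because for `n > 1` the kernel of `φ` contains a nonzero vector, which changes sign.

*Brouwer's criterion* (`nonempty_homeomorph_cantor`). A sequence of continuous `Bool`-valued functions
separating the points of a compact space `X` places `X` in the binary tree. Without isolated
points, each branch meets infinitely many branching nodes, and recording the direction taken at the
successive branching nodes gives a continuous bijection from `X` onto `ℕ → Bool`.
-/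

/-! ### A characterization of the Cantor space -/

/-- The functions `e 0, e 1, …` label each point `x` with a branch of the binary tree. `Splits e x k`
says that this branch meets a branching node of the tree at level `k`: some `y` has the same first
`k` labels as `x` and a different label at `k`. -/
def Splits {X : Type*} (e : ℕ → X → Bool) (x : X) (k : ℕ) : Prop :=
  ∃ y, (∀ i < k, e i y = e i x) ∧ e k y ≠ e k x

/-- The label of `x` at its `m`-th branching node. When `x` has infinitely many branching nodes,
`Nat.nth` takes no junk value here. -/
noncomputable def branch {X : Type*} (e : ℕ → X → Bool) (x : X) (m : ℕ) : Bool :=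
  e (Nat.nth (Splits e x) m) x

/-- Branching at level `k` depends only on the node reached after `k` labels. -/
lemma splits_congr {X : Type*} {e : ℕ → X → Bool} {x y : X} {k : ℕ}
    (h : ∀ i < k, e i x = e i y) : Splits e x k ↔ Splits e y k := by
  have key : ∀ {x y : X}, (∀ i < k, e i x = e i y) → Splits e x k → Splits e y k := by
    rintro x y h ⟨z, hz, hzk⟩
    by_cases hk : e k z = e k y
    · exact ⟨x, h, fun h' => hzk (hk.trans h'.symm)⟩
    · exact ⟨z, fun i hi => (hz i hi).trans (h i hi), hk⟩
  exact ⟨key h, key fun i hi => (h i hi).symm⟩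

/-- If the labels separate points and no cylinder is a singleton, every branch meets infinitely many
branching nodes. -/
lemma splits_infinite {X : Type*} {e : ℕ → X → Bool}
    (sep : ∀ x y : X, (∀ i, e i x = e i y) → x = y)
    (perf : ∀ (x : X) (k : ℕ), ∃ y, y ≠ x ∧ ∀ i < k, e i y = e i x) (x : X) :
    (Set.ofPred (Splits e x)).Infinite := by
  classical
  refine Set.infinite_of_forall_exists_gt fun k => ?_
  obtain ⟨y, hne, hy⟩ := perf x (k + 1)
  have hex : ∃ i, e i y ≠ e i x := by
    by_contra! h
    exact hne (sep _ _ h)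
  refine ⟨Nat.find hex, ⟨y, fun i hi => by simpa using Nat.find_min hex hi,
    Nat.find_spec hex⟩, ?_⟩
  by_contra! h
  exact Nat.find_spec hex (hy _ (by omega))

lemma count_splits_congr {X : Type*} {e : ℕ → X → Bool} {x y : X} {k : ℕ}
    [DecidablePred (Splits e x)] [DecidablePred (Splits e y)]
    (h : ∀ i < k, e i x = e i y) : ∀ j ≤ k, Nat.count (Splits e x) j = Nat.count (Splits e y) j := by
  intro j
  induction j with
  | zero => simp
  | succ j ih =>
    intro hj
    rw [Nat.count_succ, Nat.count_succ, ih (by omega),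
      if_congr (splits_congr fun i hi => h i (by omega)) rfl rfl]

/-- The position of the `m`-th branching node of `x` is read off from the labels of `x` preceding
it. -/
lemma nth_splits_congr {X : Type*} {e : ℕ → X → Bool} {x y : X} {k m : ℕ}
    (inf : (Set.ofPred (Splits e x)).Infinite)
    (h : ∀ i < k, e i x = e i y) (hm : Nat.nth (Splits e x) m ≤ k) :
    Nat.nth (Splits e y) m = Nat.nth (Splits e x) m := by
  classical
  have h1 := Nat.nth_mem_of_infinite inf m
  have h2 := (splits_congr fun i hi => h i (lt_of_lt_of_le hi hm)).1 h1
  have h3 := count_splits_congr h _ hm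
  rw [Nat.count_nth_of_infinite inf] at h3
  have h4 := Nat.nth_count h2
  rwa [← h3] at h4

/-- Brouwer's characterization of the Cantor space: a nonempty compact space with a separating sequence
of continuous `Bool`-valued functions, none of whose cylinders is a singleton, is homeomorphic to
`ℕ → Bool`. -/
theorem nonempty_homeomorph_cantor {X : Type*} [TopologicalSpace X] [CompactSpace X] [Nonempty X]
    (e : ℕ → X → Bool) (he : ∀ i, Continuous (e i))
    (sep : ∀ x y : X, (∀ i, e i x = e i y) → x = y)
    (perf : ∀ (x : X) (k : ℕ), ∃ y, y ≠ x ∧ ∀ i < k, e i y = e i x) :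
    Nonempty (X ≃ₜ (ℕ → Bool)) := by
  classical
  have inf := splits_infinite sep perf
  have hcont : Continuous (branch e) := by
    refine continuous_pi fun m => ?_
    rw [← IsLocallyConstant.iff_continuous, IsLocallyConstant.iff_eventually_eq]
    intro x
    have : ∀ᶠ y in nhds x, ∀ i ∈ Set.Iic (Nat.nth (Splits e x) m), e i x = e i y := by
      rw [Filter.eventually_all_finite (Set.finite_Iic _)]
      intro i _
      have := (IsLocallyConstant.iff_eventually_eq (e i)).1
        ((IsLocallyConstant.iff_continuous _).2 (he i)) x
      filter_upwards [this] with y hy using hy.symm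
    filter_upwards [this] with y hy
    rw [branch, branch, nth_splits_congr (inf x) (fun i hi => hy i (le_of_lt hi)) le_rfl]
    exact (hy _ (Set.mem_Iic.2 le_rfl)).symm
  have hinj : Function.Injective (branch e) := by
    intro x y hxy
    by_contra hne
    have hex : ∃ i, e i x ≠ e i y := by
      by_contra! h
      exact hne (sep _ _ h)
    have hlt : ∀ i < Nat.find hex, e i x = e i y := fun i hi => by
      simpa using Nat.find_min hex hi
    have hk := Nat.find_spec hex
    have hx : Splits e x (Nat.find hex) := ⟨y, fun i hi => (hlt i hi).symm, hk.symm⟩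
    have h1 := Nat.nth_count hx
    have h2 := nth_splits_congr (inf x) hlt h1.le
    have := congrFun hxy (Nat.count (Splits e x) (Nat.find hex))
    rw [branch, branch, h2, h1] at this
    exact hk this
  -- Every finite word is realized: if the `m`-th bit is wrong, switch to the other child at the
  -- `m`-th branching node, which leaves the earlier branching nodes and their bits unchanged.
  have hfin : ∀ (b : ℕ → Bool) (m : ℕ), ∃ x, ∀ i < m, branch e x i = b i := by
    intro b m
    induction m with
    | zero => exact ⟨Classical.arbitrary X, by simp⟩
    | succ m ih =>
      obtain ⟨x, hx⟩ := ih
      by_cases hb : branch e x m = b m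
      · exact ⟨x, fun i hi => by
          rcases Nat.lt_succ_iff_lt_or_eq.1 hi with h | rfl
          exacts [hx i h, hb]⟩
      obtain ⟨y, hy, hyk⟩ := Nat.nth_mem_of_infinite (inf x) m
      have hnth : ∀ i ≤ m, Nat.nth (Splits e y) i = Nat.nth (Splits e x) i := fun i hi =>
        nth_splits_congr (inf x) (fun i hi => (hy i hi).symm) (Nat.nth_monotone (inf x) hi)
      refine ⟨y, fun i hi => ?_⟩
      rcases Nat.lt_succ_iff_lt_or_eq.1 hi with h | rfl
      · rw [← hx i h, branch, branch, hnth i h.le]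
        exact hy _ (Nat.nth_strictMono (inf x) h)
      · rw [branch, hnth i le_rfl]
        rw [branch] at hb
        revert hb hyk
        generalize e (Nat.nth (Splits e x) i) y = p
        generalize e (Nat.nth (Splits e x) i) x = q
        generalize b i = r
        revert p q r
        decide
  have hsurj : Function.Surjective (branch e) := by
    intro b
    have hcl : ∀ m, IsClosed {x | ∀ i < m, branch e x i = b i} := fun m => by
      simp only [Set.ofPred_forall]
      exact isClosed_iInter fun i => isClosed_iInter fun _ =>
        isClosed_eq ((continuous_apply i).comp hcont) continuous_const
    obtain ⟨x, hx⟩ := IsCompact.nonempty_iInter_of_sequence_nonempty_isCompact_isClosed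
      (fun m => {x | ∀ i < m, branch e x i = b i})
      (fun m x hx i hi => hx i (by omega)) (fun m => hfin b m) (hcl 0).isCompact hcl
    rw [Set.mem_iInter] at hx
    exact ⟨x, funext fun i => hx (i + 1) i (by omega)⟩
  exact ⟨Continuous.homeoOfEquivCompactToT2 (f := Equiv.ofBijective _ ⟨hinj, hsurj⟩) hcont⟩

/-! ### Compactness of the space of left orders -/

section

variable {G : Type*}

lemma isOpen_UU [Add G] (a b : G) : IsOpen (UU a b) :=
  TopologicalSpace.isOpen_generateFrom_of_mem ⟨a, b, rfl⟩

lemma compl_UU [Add G] (a b : G) (h : a ≠ b) : (UU a b)ᶜ = UU b a := by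
  ext r
  have := r.2.1
  refine ⟨fun hr => ?_, fun h1 h2 => irrefl_of r.1 a (trans_of r.1 h2 h1)⟩
  rcases trichotomous_of r.1 a b with h' | h' | h'
  exacts [(hr h').elim, (h h').elim, h']

open Classical in
/-- The truth table of a left order, as a point of the compact space `G × G → Bool`. -/
noncomputable def code [Add G] (r : LeftAddOrder G) (p : G × G) : Bool := decide (r.1 p.1 p.2)

lemma code_eq_true [Add G] {r : LeftAddOrder G} {a b : G} : code r (a, b) = true ↔ r.1 a b := by
  simp [code]

lemma continuous_code [Add G] : Continuous (code (G := G)) := by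
  refine continuous_pi fun ⟨a, b⟩ => ?_
  rw [continuous_bool_rng true]
  have hpre : (fun r : LeftAddOrder G => code r (a, b)) ⁻¹' {true} = UU a b := by
    ext r; exact code_eq_true
  rw [hpre]
  refine ⟨⟨?_⟩, isOpen_UU a b⟩
  by_cases h : a = b
  · subst h
    convert isOpen_univ
    refine Set.eq_univ_of_forall fun r hr => ?_
    have := r.2.1
    exact irrefl_of r.1 a hr
  · rw [compl_UU a b h]
    exact isOpen_UU b a

lemma isClosed_range_code [Add G] : IsClosed (Set.range (code (G := G))) := by
  have hrange : Set.range (code (G := G)) =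
      {f | (∀ a, f (a, a) = false) ∧
        (∀ a b c, (f (a, b), f (b, c), f (a, c)) ∈
          {t : Bool × Bool × Bool | t.1 = true → t.2.1 = true → t.2.2 = true}) ∧
        (∀ a b, a ≠ b → (f (a, b), f (b, a)) ∈ {t : Bool × Bool | t.1 = true ∨ t.2 = true}) ∧
        (∀ a b c, (f (a, b), f (c + a, c + b)) ∈
          {t : Bool × Bool | t.1 = true → t.2 = true})} := by
    ext f
    constructor
    · rintro ⟨r, rfl⟩
      have := r.2.1
      simp only [Set.mem_ofPred_eq, code_eq_true, ← Bool.not_eq_true]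
      refine ⟨irrefl_of r.1, fun a b c => trans_of r.1, fun a b h => ?_, r.2.2⟩
      rcases trichotomous_of r.1 a b with h' | h' | h'
      exacts [Or.inl h', (h h').elim, Or.inr h']
    · rintro ⟨h1, h2, h3, h4⟩
      refine ⟨⟨fun a b => f (a, b) = true, ?_, fun a b c => h4 a b c⟩, ?_⟩
      · exact
          { irrefl := fun a => by simp [h1 a]
            trans := fun a b c => h2 a b c
            trichotomous := fun a b hab hba => by
              by_contra h
              exact (h3 a b h).elim hab hba }
      · funext ⟨a, b⟩
        exact Bool.eq_iff_iff.2 code_eq_true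
  rw [hrange]
  simp only [Set.ofPred_and, Set.ofPred_forall]
  refine .inter ?_ (.inter ?_ (.inter ?_ ?_))
  · exact isClosed_iInter fun a => isClosed_eq (continuous_apply _) continuous_const
  · exact isClosed_iInter fun a => isClosed_iInter fun b => isClosed_iInter fun c =>
      (isClosed_discrete _).preimage (by fun_prop)
  · exact isClosed_iInter fun a => isClosed_iInter fun b => isClosed_iInter fun _ =>
      (isClosed_discrete _).preimage (by fun_prop)
  · exact isClosed_iInter fun a => isClosed_iInter fun b => isClosed_iInter fun c =>
      (isClosed_discrete _).preimage (by fun_prop)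

lemma code_injective [Add G] : Function.Injective (code (G := G)) := by
  intro r s h
  refine Subtype.ext (funext fun a => funext fun b => propext ?_)
  rw [← code_eq_true, ← code_eq_true, h]

instance [Add G] : CompactSpace (LeftAddOrder G) := by
  have hind : Topology.IsInducing (code (G := G)) := by
    refine ⟨le_antisymm continuous_code.le_induced (le_generateFrom ?_)⟩
    rintro _ ⟨a, b, rfl⟩
    refine ⟨{f | f (a, b) = true},
      (isOpen_discrete {true}).preimage (continuous_apply (A := fun _ => Bool) (a, b)), ?_⟩
    ext r
    exact code_eq_true
  exact Topology.IsClosedEmbedding.compactSpace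
    (⟨⟨hind, code_injective⟩, isClosed_range_code⟩ : Topology.IsClosedEmbedding (code (G := G)))

/-! ### Positive functionals on integer vectors -/

/-- Gordan's alternative over `ℚ`: finitely many vectors in a subsemigroup of `ℤⁿ` that omits `0` lie
in an open rational half-space. The proof is Fourier–Motzkin elimination of the first coordinate of
the functional. -/
theorem exists_pos_functional (n : ℕ) :
    ∀ (P : Set (Fin n → ℤ)), (∀ f ∈ P, ∀ g ∈ P, f + g ∈ P) → 0 ∉ P →
    ∀ F : Finset (Fin n → ℤ), ↑F ⊆ P → ∃ φ : Fin n → ℚ, ∀ f ∈ F, 0 < ∑ i, φ i * f i := by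
  induction n with
  | zero =>
    intro P _ h0 F hF
    refine ⟨0, fun f hf => (h0 ?_).elim⟩
    rw [← Subsingleton.elim f 0]
    exact hF hf
  | succ n ih =>
    intro P hadd h0 F hF
    have hsmul : ∀ (k : ℕ), 0 < k → ∀ f ∈ P, (k : ℤ) • f ∈ P := by
      intro k hk f hf
      induction k, hk using Nat.le_induction with
      | base => simpa using hf
      | succ k _ ih =>
        rw [Nat.cast_succ, add_smul, one_smul]
        exact hadd _ ih _ hf
    have hsmul' : ∀ (k : ℤ), 0 < k → ∀ f ∈ P, k • f ∈ P := by
      intro k hk f hf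
      lift k to ℕ using hk.le
      exact hsmul k (by exact_mod_cast hk) f hf
    -- For `f 0 > 0` and `g 0 < 0`, the positive combination of `f` and `g` whose first coordinate
    -- vanishes gives the inequality that makes the lower bound from `f` less than the upper bound
    -- from `g` on the coefficient `c` chosen below.
    obtain ⟨φ, hφ⟩ := ih {g | (Fin.cons 0 g : Fin (n + 1) → ℤ) ∈ P}
      (fun f hf g hg => by
        have := hadd _ hf _ hg
        rw [Set.mem_ofPred_eq]
        convert this using 1
        ext i; refine Fin.cases ?_ (fun j => ?_) i <;> simp)
      (fun h => h0 (by
        rw [Set.mem_ofPred_eq] at h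
        convert h using 1
        ext i; refine Fin.cases ?_ (fun j => ?_) i <;> simp))
      ((F.filter fun f => f 0 = 0).image Fin.tail ∪
        ((F ×ˢ F).filter fun p => 0 < p.1 0 ∧ p.2 0 < 0).image fun p =>
          Fin.tail (p.1 0 • p.2 + (-p.2 0) • p.1))
      (by
        intro g hg
        simp only [Finset.coe_union, Finset.coe_image, Finset.coe_filter, Set.mem_union,
          Set.mem_image, Set.mem_ofPred_eq, Finset.mem_product] at hg
        rw [Set.mem_ofPred_eq]
        rcases hg with ⟨f, ⟨hf, hf0⟩, rfl⟩ | ⟨⟨f, g⟩, ⟨⟨hf, hg⟩, hf0, hg0⟩, rfl⟩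
        · rw [← hf0, Fin.cons_self_tail]
          exact hF hf
        · have := hadd _ (hsmul' (f 0) hf0 g (hF hg)) _ (hsmul' (-g 0) (neg_pos.2 hg0) f (hF hf))
          convert this using 1
          ext i
          refine Fin.cases ?_ (fun j => ?_) i
          · simp; ring
          · simp [Fin.tail])
    have hφ0 : ∀ f ∈ F, f 0 = 0 → 0 < ∑ i, φ i * f i.succ := fun f hf hf0 =>
      hφ (Fin.tail f) (Finset.mem_union_left _
        (Finset.mem_image_of_mem _ (Finset.mem_filter.2 ⟨hf, hf0⟩)))
    have hφ1 : ∀ f ∈ F, ∀ g ∈ F, 0 < f 0 → g 0 < 0 →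
        0 < (f 0 : ℚ) * ∑ i, φ i * g i.succ - g 0 * ∑ i, φ i * f i.succ := by
      intro f hf g hg hf0 hg0
      have := hφ _ (Finset.mem_union_right _ (Finset.mem_image_of_mem _
        (Finset.mem_filter.2 ⟨Finset.mk_mem_product hf hg, hf0, hg0⟩)))
      convert this using 1
      rw [Finset.mul_sum, Finset.mul_sum, ← Finset.sum_sub_distrib]
      refine Finset.sum_congr rfl fun i _ => ?_
      simp [Fin.tail]
      ring
    obtain ⟨c, hc1, hc2⟩ := Order.exists_between_finsets
      ((F.filter fun f => 0 < f 0).image fun f => -(∑ i, φ i * f i.succ) / f 0)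
      ((F.filter fun f => f 0 < 0).image fun f => -(∑ i, φ i * f i.succ) / f 0)
      (by
        simp only [Finset.mem_image, Finset.mem_filter]
        rintro _ ⟨f, ⟨hf, hf0⟩, rfl⟩ _ ⟨g, ⟨hg, hg0⟩, rfl⟩
        have h := hφ1 f hf g hg hf0 hg0
        have hf0' : (0 : ℚ) < f 0 := by exact_mod_cast hf0
        have hg0' : (0 : ℚ) < -g 0 := by exact_mod_cast neg_pos.2 hg0
        rw [← neg_div_neg_eq (-(∑ i, φ i * g i.succ) : ℚ), neg_neg, div_lt_div_iff₀ hf0' hg0']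
        linarith)
    refine ⟨Fin.cons c φ, fun f hf => ?_⟩
    rw [Fin.sum_univ_succ]
    simp only [Fin.cons_zero, Fin.cons_succ]
    rcases lt_trichotomy (f 0) 0 with h | h | h
    · have := hc2 _ (Finset.mem_image_of_mem _ (Finset.mem_filter.2 ⟨hf, h⟩))
      rw [lt_div_iff_of_neg (by exact_mod_cast h)] at this
      linarith
    · rw [h]
      simpa using hφ0 f hf h
    · have := hc1 _ (Finset.mem_image_of_mem _ (Finset.mem_filter.2 ⟨hf, h⟩))
      rw [div_lt_iff₀ (by exact_mod_cast h)] at this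
      linarith

/-- For `n > 1`, a rational functional kills a nonzero integer vector; this is where `n > 1` is
needed. -/
lemma exists_ker {n : ℕ} (hn : 1 < n) (φ : Fin n → ℚ) :
    ∃ v : Fin n → ℤ, v ≠ 0 ∧ ∑ i, φ i * v i = 0 := by
  obtain ⟨p, q, hpq, h⟩ : ∃ p q : ℤ, (p ≠ 0 ∨ q ≠ 0) ∧ φ ⟨0, by omega⟩ * p + φ ⟨1, hn⟩ * q = 0 := by
    generalize φ ⟨0, _⟩ = a
    generalize φ ⟨1, _⟩ = b
    by_cases hb : b = 0
    · exact ⟨0, 1, by simp, by simp [hb]⟩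
    · refine ⟨b.num * a.den, -(a.num * b.den), Or.inl (by simp [hb]), ?_⟩
      push_cast
      have ha := Rat.mul_den_eq_num a
      have hb := Rat.mul_den_eq_num b
      linear_combination (b.num : ℚ) * ha - (a.num : ℚ) * hb
  have hne : (⟨0, by omega⟩ : Fin n) ≠ ⟨1, hn⟩ := by simp
  refine ⟨Pi.single ⟨0, by omega⟩ p + Pi.single ⟨1, hn⟩ q, ?_, ?_⟩
  · intro h0
    have h1 := congrFun h0 ⟨0, by omega⟩
    have h2 := congrFun h0 ⟨1, hn⟩
    simp at h1 h2
    exact hpq.elim (· h1) (· h2)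
  · rw [← h]
    simp [mul_add, Finset.sum_add_distrib, Pi.single_apply]

/-! ### Perturbing a left order -/

lemma IsLeftAddOrder.iff_sub [AddCommGroup G] {r : G → G → Prop} (hr : IsLeftAddOrder r) (a b : G) :
    r a b ↔ r 0 (b - a) := by
  constructor
  · intro h
    simpa [sub_eq_neg_add] using hr.2 _ _ (-a) h
  · intro h
    simpa using hr.2 _ _ a h

/-- Compare first by `φ`, and break ties by the reverse of `r`. -/
lemma isLeftAddOrder_flip [AddCommGroup G] {r : G → G → Prop} (hr : IsLeftAddOrder r) (φ : G →+ ℚ) :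
    IsLeftAddOrder fun x y => φ x < φ y ∨ φ x = φ y ∧ r y x := by
  have := hr.1
  refine ⟨{ irrefl := ?irrefl, trans := ?trans, trichotomous := ?tri }, ?add⟩
  case irrefl =>
    rintro a (h | h)
    exacts [lt_irrefl _ h, irrefl_of r a h.2]
  case trans =>
    rintro a b c (h | h) (h' | h')
    · exact Or.inl (h.trans h')
    · exact Or.inl (h'.1 ▸ h)
    · exact Or.inl (h.1 ▸ h')
    · exact Or.inr ⟨h.1.trans h'.1, trans_of r h'.2 h.2⟩
  case tri =>
    intro a b hab hba
    push Not at hab hba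
    have h := le_antisymm hba.1 hab.1
    rcases trichotomous_of r a b with h' | h' | h'
    exacts [(hba.2 h.symm h').elim, h', (hab.2 h h').elim]
  case add =>
    intro a b c h
    simpa using h.imp_right (And.imp_right (hr.2 _ _ c))

/-- No left order on `ℤⁿ` is isolated when `n > 1`: finitely many comparisons do not determine it. -/
lemma exists_ne_agree {n : ℕ} (hn : 1 < n) (r : LeftAddOrder (Fin n → ℤ))
    (S : Finset ((Fin n → ℤ) × (Fin n → ℤ))) :
    ∃ s, s ≠ r ∧ ∀ p ∈ S, code s p = code r p := by
  classical
  have := r.2.1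
  -- Adding the swapped pairs turns negative answers `¬ a < b`, `a ≠ b`, into positive ones `b < a`.
  obtain ⟨φ, hφ⟩ := exists_pos_functional n {g | r.1 0 g}
    (fun f hf g hg => trans_of r.1 hf (by simpa using r.2.2 0 g f hg))
    (irrefl_of r.1 0)
    ((S ∪ S.image Prod.swap).image (fun p => p.2 - p.1) |>.filter fun g => r.1 0 g)
    (by simp)
  obtain ⟨v, hv0, hv⟩ := exists_ker hn φ
  let Φ : (Fin n → ℤ) →+ ℚ :=
    { toFun := fun f => ∑ i, φ i * f i
      map_zero' := by simp
      map_add' := fun f g => by simp [mul_add, Finset.sum_add_distrib] }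
  have hpos : ∀ a b, (a, b) ∈ S ∪ S.image Prod.swap → r.1 a b → Φ a < Φ b := by
    intro a b hab h
    rw [← sub_pos, ← map_sub]
    exact hφ _ (Finset.mem_filter.2 ⟨Finset.mem_image_of_mem _ hab, (r.2.iff_sub a b).1 h⟩)
  refine ⟨⟨_, isLeftAddOrder_flip r.2 Φ⟩, fun h => ?_, ?_⟩
  · have hs : ∀ a b, (Φ a < Φ b ∨ Φ a = Φ b ∧ r.1 b a) ↔ r.1 a b := fun a b =>
      iff_of_eq (congrFun (congrFun (congrArg Subtype.val h) a) b)
    have hΦ : Φ v = Φ 0 := by rw [map_zero]; exact hv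
    rcases trichotomous_of r.1 0 v with h' | h' | h'
    · exact irrefl_of r.1 0 (trans_of r.1 h' ((hs _ _).1 (Or.inr ⟨hΦ, h'⟩)))
    · exact hv0 h'.symm
    · exact irrefl_of r.1 0 (trans_of r.1 ((hs _ _).1 (Or.inr ⟨hΦ.symm, h'⟩)) h')
  · rintro ⟨a, b⟩ hab
    refine Bool.eq_iff_iff.2 (code_eq_true.trans (Iff.trans ?_ code_eq_true.symm))
    refine ⟨fun h => ?_, fun h => Or.inl (hpos a b (Finset.mem_union_left _ hab) h)⟩
    rcases trichotomous_of r.1 a b with h' | h' | h'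
    · exact h'
    · subst h'
      exact h.elim (fun h => (lt_irrefl _ h).elim) And.right
    · have := hpos b a (Finset.mem_union_right _ (Finset.mem_image.2 ⟨_, hab, rfl⟩)) h'
      exact h.elim (fun h => (lt_asymm h this).elim) fun h => (this.ne h.1.symm).elim

/-- The lexicographic order is a left order. -/
instance (n : ℕ) : Nonempty (LeftAddOrder (Fin n → ℤ)) :=
  ⟨⟨fun a b => toLex a < toLex b,
    { irrefl := fun a => lt_irrefl (toLex a)
      trans := fun a _ _ => lt_trans (a := toLex a)
      trichotomous := fun _ _ h h' =>
        le_antisymm (α := Lex (Fin n → ℤ)) (not_lt.1 h') (not_lt.1 h) },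
    fun _ _ _ h => add_lt_add_right (α := Lex (Fin n → ℤ)) h _⟩⟩

end

/-- For `n > 1`, the space `LO(ℤⁿ)` of left orders on the free abelian group
`ℤⁿ` is homeomorphic to the Cantor space `ℕ → Bool`. -/
theorem stmt7 (n : ℕ) (hn : 1 < n) :
    Nonempty (LeftAddOrder (Fin n → ℤ) ≃ₜ (ℕ → Bool)) := by
  obtain ⟨enum, henum⟩ := exists_surjective_nat ((Fin n → ℤ) × (Fin n → ℤ))
  refine nonempty_homeomorph_cantor (fun i r => code r (enum i))
    (fun i => (continuous_apply (enum i)).comp continuous_code) (fun r s h => ?_) fun r k => ?_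
  · refine code_injective (funext fun p => ?_)
    obtain ⟨i, rfl⟩ := henum p
    exact h i
  · classical
    obtain ⟨s, hne, hs⟩ := exists_ne_agree hn r ((Finset.range k).image enum)
    exact ⟨s, hne, fun i hi => hs _ (Finset.mem_image_of_mem _ (Finset.mem_range.2 hi))⟩
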